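/- Let Ω ⊆ ℝ² be open, ε > 0, λ > 0, and let Z : Ω → ℝ² be smooth. Suppose v : Ω × ℝ → ℂ and B : Ω × ℝ → ℝ² are smooth and satisfy the accelerated Ginzburg-Landau equations pointwise on Ω × ℝ, with h' := curl B: λ⁻¹ ∂_t v = Δ_B v + (v/ε²)(1−|v|²) + 2i ∇_B v · Z − v|Z|², and λ⁻¹ ∂_t B = ∇^⊥ h' + (iv, ∇_B v) + (|v|²−1) Z. Let T be the stress-energy tensor with components T_{ij} = (∂_i^B v, ∂_j^B v) − δ_{ij}(½|∇_B v|² + (1−|v|²)²/(4ε²) − ½(curl B)²). Then pointwise on Ω × ℝ: div T = λ⁻¹((∂_t v, ∇_B v) − h' (∂_t B)^⊥) + (v, ∇_B v)|Z|² − μ(v,B) Z^⊥, where (div T)_i := ∂₁T_{1i} + ∂₂T_{2i}. -/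

import Mathlib

noncomputable section

open Complex

/-- Real inner product of two complex numbers: `(a,b) = Re a · Re b + Im a · Im b`. -/
def rip (a b : ℂ) : ℝ := a.re * b.re + a.im * b.im

/-- `(a, X)` for `a : ℂ` and `X : ℂ²`: the vector in `ℝ²` with components `(a,X₁)`, `(a,X₂)`. -/
def ripv (a : ℂ) (X : ℂ × ℂ) : ℝ × ℝ := (rip a X.1, rip a X.2)

/-- Dot product of `X : ℂ²` with `Z : ℝ²`: `X·Z = X₁Z₁ + X₂Z₂ ∈ ℂ`. -/
def cdotR (X : ℂ × ℂ) (Z : ℝ × ℝ) : ℂ := X.1 * (Z.1 : ℂ) + X.2 * (Z.2 : ℂ)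

/-- Euclidean dot product on `ℝ²`. -/
def rdot (a b : ℝ × ℝ) : ℝ := a.1 * b.1 + a.2 * b.2

/-- Perpendicular of a vector: `Z^⊥ = (−Z₂, Z₁)`. -/
def perp (a : ℝ × ℝ) : ℝ × ℝ := (-a.2, a.1)

/-! ### Spatial differential operators for functions on `ℝ²` -/

/-- First spatial partial derivative `∂₁`. -/
def pd1 {E : Type*} [NormedAddCommGroup E] [NormedSpace ℝ E]
    (f : ℝ × ℝ → E) (x : ℝ × ℝ) : E := fderiv ℝ f x (1, 0)

/-- Second spatial partial derivative `∂₂`. -/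
def pd2 {E : Type*} [NormedAddCommGroup E] [NormedSpace ℝ E]
    (f : ℝ × ℝ → E) (x : ℝ × ℝ) : E := fderiv ℝ f x (0, 1)

/-- Gradient `∇g = (∂₁g, ∂₂g)`. -/
def sgrad (g : ℝ × ℝ → ℝ) (x : ℝ × ℝ) : ℝ × ℝ := (pd1 g x, pd2 g x)

/-- Perpendicular gradient `∇^⊥ g = (−∂₂g, ∂₁g)`. -/
def sgradPerp (g : ℝ × ℝ → ℝ) (x : ℝ × ℝ) : ℝ × ℝ := (-(pd2 g x), pd1 g x)

/-- Laplacian `Δg = ∂₁∂₁g + ∂₂∂₂g`. -/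
def slap (g : ℝ × ℝ → ℝ) (x : ℝ × ℝ) : ℝ := pd1 (pd1 g) x + pd2 (pd2 g) x

/-- Curl of a vector field: `curl X = ∂₁X₂ − ∂₂X₁`. -/
def scurl (X : ℝ × ℝ → ℝ × ℝ) (x : ℝ × ℝ) : ℝ := (pd1 X x).2 - (pd2 X x).1

/-- Divergence of a vector field: `div X = ∂₁X₁ + ∂₂X₂`. -/
def sdiv (X : ℝ × ℝ → ℝ × ℝ) (x : ℝ × ℝ) : ℝ := (pd1 X x).1 + (pd2 X x).2

/-- Covariant partial derivative `∂₁^A u = ∂₁u − iA₁u`. -/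
def cpd1 (A : ℝ × ℝ → ℝ × ℝ) (u : ℝ × ℝ → ℂ) (x : ℝ × ℝ) : ℂ :=
  pd1 u x - Complex.I * ((A x).1 : ℂ) * u x

/-- Covariant partial derivative `∂₂^A u = ∂₂u − iA₂u`. -/
def cpd2 (A : ℝ × ℝ → ℝ × ℝ) (u : ℝ × ℝ → ℂ) (x : ℝ × ℝ) : ℂ :=
  pd2 u x - Complex.I * ((A x).2 : ℂ) * u x

/-- Covariant gradient `∇_A u = ∇u − iAu`. -/
def covGrad (A : ℝ × ℝ → ℝ × ℝ) (u : ℝ × ℝ → ℂ) (x : ℝ × ℝ) : ℂ × ℂ :=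
  (cpd1 A u x, cpd2 A u x)

/-- Covariant Laplacian `Δ_A u = ∂₁^A ∂₁^A u + ∂₂^A ∂₂^A u`. -/
def covLap (A : ℝ × ℝ → ℝ × ℝ) (u : ℝ × ℝ → ℂ) (x : ℝ × ℝ) : ℂ :=
  cpd1 A (cpd1 A u) x + cpd2 A (cpd2 A u) x

/-- Vorticity `μ(u,A) = curl((iu, ∇_A u) + A)`. -/
def svort (u : ℝ × ℝ → ℂ) (A : ℝ × ℝ → ℝ × ℝ) (x : ℝ × ℝ) : ℝ :=
  scurl (fun y => ripv (Complex.I * u y) (covGrad A u y) + A y) x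

/-- Ginzburg–Landau energy density
`g⁰_ε(u,A) = ½(|∇_A u|² + (1−|u|²)²/(2ε²) + (curl A)²)`. -/
def glEnergy (ε : ℝ) (u : ℝ × ℝ → ℂ) (A : ℝ × ℝ → ℝ × ℝ) (x : ℝ × ℝ) : ℝ :=
  (1 / 2) * (Complex.normSq (cpd1 A u x) + Complex.normSq (cpd2 A u x)
    + (1 - Complex.normSq (u x)) ^ 2 / (2 * ε ^ 2) + (scurl A x) ^ 2)

/-! ### Space-time differential operators for functions on `ℝ² × ℝ`
(spatial operators act in the spatial variables, `tdt` is the time derivative) -/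

/-- First spatial partial derivative `∂₁`. -/
def sp1 {E : Type*} [NormedAddCommGroup E] [NormedSpace ℝ E]
    (f : (ℝ × ℝ) × ℝ → E) (z : (ℝ × ℝ) × ℝ) : E := fderiv ℝ f z ((1, 0), 0)

/-- Second spatial partial derivative `∂₂`. -/
def sp2 {E : Type*} [NormedAddCommGroup E] [NormedSpace ℝ E]
    (f : (ℝ × ℝ) × ℝ → E) (z : (ℝ × ℝ) × ℝ) : E := fderiv ℝ f z ((0, 1), 0)

/-- Time derivative `∂_t`. -/
def tdt {E : Type*} [NormedAddCommGroup E] [NormedSpace ℝ E]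
    (f : (ℝ × ℝ) × ℝ → E) (z : (ℝ × ℝ) × ℝ) : E := fderiv ℝ f z ((0, 0), 1)

/-- Spatial gradient. -/
def tgrad (g : (ℝ × ℝ) × ℝ → ℝ) (z : (ℝ × ℝ) × ℝ) : ℝ × ℝ := (sp1 g z, sp2 g z)

/-- Spatial perpendicular gradient `∇^⊥ g = (−∂₂g, ∂₁g)`. -/
def tgradPerp (g : (ℝ × ℝ) × ℝ → ℝ) (z : (ℝ × ℝ) × ℝ) : ℝ × ℝ := (-(sp2 g z), sp1 g z)

/-- Spatial Laplacian. -/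
def tlap (g : (ℝ × ℝ) × ℝ → ℝ) (z : (ℝ × ℝ) × ℝ) : ℝ := sp1 (sp1 g) z + sp2 (sp2 g) z

/-- Spatial curl of a time-dependent vector field. -/
def tcurl (X : (ℝ × ℝ) × ℝ → ℝ × ℝ) (z : (ℝ × ℝ) × ℝ) : ℝ := (sp1 X z).2 - (sp2 X z).1

/-- Spatial divergence of a time-dependent vector field. -/
def tdiv (X : (ℝ × ℝ) × ℝ → ℝ × ℝ) (z : (ℝ × ℝ) × ℝ) : ℝ := (sp1 X z).1 + (sp2 X z).2

/-- Covariant partial derivative `∂₁^B w = ∂₁w − iB₁w`. -/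
def tcpd1 (B : (ℝ × ℝ) × ℝ → ℝ × ℝ) (w : (ℝ × ℝ) × ℝ → ℂ) (z : (ℝ × ℝ) × ℝ) : ℂ :=
  sp1 w z - Complex.I * ((B z).1 : ℂ) * w z

/-- Covariant partial derivative `∂₂^B w = ∂₂w − iB₂w`. -/
def tcpd2 (B : (ℝ × ℝ) × ℝ → ℝ × ℝ) (w : (ℝ × ℝ) × ℝ → ℂ) (z : (ℝ × ℝ) × ℝ) : ℂ :=
  sp2 w z - Complex.I * ((B z).2 : ℂ) * w z

/-- Covariant gradient `∇_B w = ∇w − iBw` (spatial). -/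
def tcovGrad (B : (ℝ × ℝ) × ℝ → ℝ × ℝ) (w : (ℝ × ℝ) × ℝ → ℂ) (z : (ℝ × ℝ) × ℝ) : ℂ × ℂ :=
  (tcpd1 B w z, tcpd2 B w z)

/-- Covariant Laplacian `Δ_B w`. -/
def tcovLap (B : (ℝ × ℝ) × ℝ → ℝ × ℝ) (w : (ℝ × ℝ) × ℝ → ℂ) (z : (ℝ × ℝ) × ℝ) : ℂ :=
  tcpd1 B (tcpd1 B w) z + tcpd2 B (tcpd2 B w) z

/-- Covariant time derivative `∂_ξ w = ∂_t w + iξw`. -/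
def covt (ξ : (ℝ × ℝ) × ℝ → ℝ) (w : (ℝ × ℝ) × ℝ → ℂ) (z : (ℝ × ℝ) × ℝ) : ℂ :=
  tdt w z + Complex.I * (ξ z : ℂ) * w z

/-- Vorticity `μ(w,B) = curl((iw, ∇_B w) + B)`. -/
def tvort (w : (ℝ × ℝ) × ℝ → ℂ) (B : (ℝ × ℝ) × ℝ → ℝ × ℝ) (z : (ℝ × ℝ) × ℝ) : ℝ :=
  tcurl (fun y => ripv (Complex.I * w y) (tcovGrad B w y) + B y) z

/-- Velocity `V(w,B,ξ) = ∇(iw,∂_ξ w) − ∂_t(iw,∇_B w) − (∂_t B + ∇ξ)`. -/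
def tvel (w : (ℝ × ℝ) × ℝ → ℂ) (B : (ℝ × ℝ) × ℝ → ℝ × ℝ) (ξ : (ℝ × ℝ) × ℝ → ℝ)
    (z : (ℝ × ℝ) × ℝ) : ℝ × ℝ :=
  tgrad (fun y => rip (Complex.I * w y) (covt ξ w y)) z
    - tdt (fun y => ripv (Complex.I * w y) (tcovGrad B w y)) z
    - (tdt B z + tgrad ξ z)

/-- Time-dependent Ginzburg–Landau energy density. -/
def tglEnergy (ε : ℝ) (w : (ℝ × ℝ) × ℝ → ℂ) (B : (ℝ × ℝ) × ℝ → ℝ × ℝ)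
    (z : (ℝ × ℝ) × ℝ) : ℝ :=
  (1 / 2) * (Complex.normSq (tcpd1 B w z) + Complex.normSq (tcpd2 B w z)
    + (1 - Complex.normSq (w z)) ^ 2 / (2 * ε ^ 2) + (tcurl B z) ^ 2)

/-!
Metric compatibility `∂(f, g) = (Df, g) + (f, Dg)` of the covariant derivative and the commutator
`[∂₁^B, ∂₂^B] = −i h'` give, for arbitrary fields, the Noether-type identity
`div T = (Δ_B v + (v/ε²)(1 − |v|²), ∇_B v) − h' (∇^⊥ h' + (iv, ∇_B v))^⊥`.
The evolution equations replace the two brackets by `λ⁻¹ ∂_t v`, `λ⁻¹ ∂_t B` and terms in `Z`, and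
the part of these linear in `Z` is `−(2(i∂₁^B v, ∂₂^B v) + (1 − |v|²) h') Z^⊥ = −μ(v, B) Z^⊥`.
-/

section Algebra

lemma rip_eq_inner (a b : ℂ) : rip a b = inner ℝ a b := by
  simp only [rip, Complex.inner, mul_re, conj_re, conj_im]
  ring

lemma rip_self (a : ℂ) : rip a a = normSq a := (normSq_apply a).symm

lemma rip_comm (a b : ℂ) : rip a b = rip b a := by
  rw [rip_eq_inner, rip_eq_inner, real_inner_comm]

lemma rip_add_left (a b c : ℂ) : rip (a + b) c = rip a c + rip b c := by
  simp only [rip_eq_inner, inner_add_left]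

lemma rip_add_right (a b c : ℂ) : rip a (b + c) = rip a b + rip a c := by
  simp only [rip_eq_inner, inner_add_right]

lemma rip_I_mul_left_swap (a b : ℂ) : rip (I * a) b = -rip (I * b) a := by
  simp only [rip, I_mul_re, I_mul_im]
  ring

lemma rip_I_mul_ofReal_mul_right (r : ℝ) (a b : ℂ) :
    rip a (I * r * b) = r * rip (I * b) a := by
  simp only [rip, mul_assoc, I_mul_re, I_mul_im, re_ofReal_mul, im_ofReal_mul]
  ring

lemma rip_I_mul_I_mul (a b : ℂ) : rip (I * a) (I * b) = rip a b := by
  simp only [rip, I_mul_re, I_mul_im]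
  ring

lemma ripv_add_left (a b : ℂ) (X : ℂ × ℂ) : ripv (a + b) X = ripv a X + ripv b X := by
  simp only [ripv, rip_add_left, Prod.mk_add_mk]

lemma ripv_sub_left (a b : ℂ) (X : ℂ × ℂ) : ripv (a - b) X = ripv a X - ripv b X := by
  simp only [ripv, rip_eq_inner, inner_sub_left, Prod.mk_sub_mk]

lemma ripv_ofReal_mul_left (r : ℝ) (a : ℂ) (X : ℂ × ℂ) : ripv (r * a) X = r • ripv a X := by
  simp only [ripv, rip_eq_inner, ← real_smul, real_inner_smul_left, Prod.smul_mk, smul_eq_mul]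

lemma ripv_I_mul_cdotR (X : ℂ × ℂ) (Z : ℝ × ℝ) :
    ripv (I * cdotR X Z) X = rip (I * X.1) X.2 • perp Z := by
  ext <;>
  · simp only [ripv, rip, cdotR, perp, I_mul_re, I_mul_im, add_re, add_im, re_mul_ofReal,
      im_mul_ofReal, Prod.smul_mk, smul_eq_mul]
    ring

lemma perp_sub (a b : ℝ × ℝ) : perp (a - b) = perp a - perp b := by
  simp only [perp, Prod.fst_sub, Prod.snd_sub, Prod.mk_sub_mk, neg_sub_neg, neg_sub]

lemma perp_smul (r : ℝ) (a : ℝ × ℝ) : perp (r • a) = r • perp a := by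
  simp only [perp, Prod.smul_fst, Prod.smul_snd, Prod.smul_mk, smul_neg]

end Algebra

section CovariantDerivative

variable {V : Type*} [NormedAddCommGroup V] [NormedSpace ℝ V]
  {f g u : V → ℂ} {a b : V → ℝ} {z : V}

lemma differentiableAt_rip (hf : DifferentiableAt ℝ f z) (hg : DifferentiableAt ℝ g z) :
    DifferentiableAt ℝ (fun y => rip (f y) (g y)) z := by
  simpa only [rip_eq_inner] using hf.inner ℝ hg

lemma fderiv_rip_apply (hf : DifferentiableAt ℝ f z) (hg : DifferentiableAt ℝ g z) (d : V) :
    fderiv ℝ (fun y => rip (f y) (g y)) z d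
      = rip (fderiv ℝ f z d) (g z) + rip (f z) (fderiv ℝ g z d) := by
  simp only [rip_eq_inner]
  rw [fderiv_inner_apply ℝ hf hg, add_comm]

/-- The covariant derivative `∂_d u − i a u` in the direction `d`, where the real function `a` is
the component along `d` of the connection. -/
def covDeriv (a : V → ℝ) (d : V) (u : V → ℂ) (z : V) : ℂ :=
  fderiv ℝ u z d - I * (a z : ℂ) * u z

lemma fderiv_rip_eq_covDeriv (hf : DifferentiableAt ℝ f z) (hg : DifferentiableAt ℝ g z)
    (a : V → ℝ) (d : V) :
    fderiv ℝ (fun y => rip (f y) (g y)) z d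
      = rip (covDeriv a d f z) (g z) + rip (f z) (covDeriv a d g z) := by
  rw [fderiv_rip_apply hf hg]
  simp only [covDeriv, rip, sub_re, sub_im, mul_assoc, I_mul_re, I_mul_im, re_ofReal_mul,
    im_ofReal_mul]
  ring

lemma fderiv_normSq_eq_covDeriv (hf : DifferentiableAt ℝ f z) (a : V → ℝ) (d : V) :
    fderiv ℝ (fun y => normSq (f y)) z d = 2 * rip (f z) (covDeriv a d f z) := by
  simp only [← rip_self]
  rw [fderiv_rip_eq_covDeriv hf hf a, rip_comm, two_mul]

lemma differentiableAt_normSq (hf : DifferentiableAt ℝ f z) :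
    DifferentiableAt ℝ (fun y => normSq (f y)) z := by
  simpa only [rip_self] using differentiableAt_rip hf hf

lemma covDeriv_I_mul (hf : DifferentiableAt ℝ f z) (a : V → ℝ) (d : V) :
    covDeriv a d (fun y => I * f y) z = I * covDeriv a d f z := by
  simp only [covDeriv, fderiv_const_mul hf, smul_apply, smul_eq_mul]
  ring

lemma hasFDerivAt_covDeriv (hu : ContDiffAt ℝ 2 u z) (ha : DifferentiableAt ℝ a z) (d : V) :
    HasFDerivAt (covDeriv a d u)
      ((fderiv ℝ (fderiv ℝ u) z).flip d
        - ((I * (a z : ℂ)) • fderiv ℝ u z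
          + u z • I • ofRealCLM.comp (fderiv ℝ a z))) z := by
  have hu' : HasFDerivAt (fderiv ℝ u) (fderiv ℝ (fderiv ℝ u) z) z :=
    ((hu.fderiv_right (m := 1) le_rfl).differentiableAt one_ne_zero).hasFDerivAt
  have hfd : HasFDerivAt (fun y => fderiv ℝ u y d) ((fderiv ℝ (fderiv ℝ u) z).flip d) z :=
    (ContinuousLinearMap.apply ℝ ℂ d).hasFDerivAt.comp z hu'
  have haI : HasFDerivAt (fun y => I * (a y : ℂ)) (I • ofRealCLM.comp (fderiv ℝ a z)) z :=
    (ofRealCLM.hasFDerivAt.comp z ha.hasFDerivAt).const_mul I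
  exact hfd.sub (haI.mul (hu.differentiableAt two_ne_zero).hasFDerivAt)

lemma differentiableAt_covDeriv (hu : ContDiffAt ℝ 2 u z) (ha : DifferentiableAt ℝ a z) (d : V) :
    DifferentiableAt ℝ (covDeriv a d u) z :=
  (hasFDerivAt_covDeriv hu ha d).differentiableAt

lemma covDeriv_covDeriv_comm (hu : ContDiffAt ℝ 2 u z) (ha : DifferentiableAt ℝ a z)
    (hb : DifferentiableAt ℝ b z) (d e : V) :
    covDeriv b e (covDeriv a d u) z
      = covDeriv a d (covDeriv b e u) z
        + I * ((fderiv ℝ b z d - fderiv ℝ a z e : ℝ) : ℂ) * u z := by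
  have hsymm : fderiv ℝ (fderiv ℝ u) z d e = fderiv ℝ (fderiv ℝ u) z e d :=
    hu.isSymmSndFDerivAt (by simp) d e
  change fderiv ℝ (covDeriv a d u) z e - _ = fderiv ℝ (covDeriv b e u) z d - _ + _
  rw [(hasFDerivAt_covDeriv hu ha d).fderiv, (hasFDerivAt_covDeriv hu hb e).fderiv]
  simp only [covDeriv, hsymm, sub_apply, add_apply, smul_apply, smul_eq_mul, ofReal_sub,
    ContinuousLinearMap.flip_apply, ContinuousLinearMap.comp_apply, ofRealCLM_apply]
  ring

end CovariantDerivative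

section SpaceTime

variable {v : (ℝ × ℝ) × ℝ → ℂ} {B X Y : (ℝ × ℝ) × ℝ → ℝ × ℝ} {z : (ℝ × ℝ) × ℝ}

lemma differentiableAt_tcpd1 (hv : ContDiffAt ℝ 2 v z) (hB : DifferentiableAt ℝ B z) :
    DifferentiableAt ℝ (tcpd1 B v) z :=
  differentiableAt_covDeriv hv hB.fst ((1, 0), 0)

lemma differentiableAt_tcpd2 (hv : ContDiffAt ℝ 2 v z) (hB : DifferentiableAt ℝ B z) :
    DifferentiableAt ℝ (tcpd2 B v) z :=
  differentiableAt_covDeriv hv hB.snd ((0, 1), 0)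

lemma sp1_rip {f g : (ℝ × ℝ) × ℝ → ℂ} (hf : DifferentiableAt ℝ f z)
    (hg : DifferentiableAt ℝ g z) (B : (ℝ × ℝ) × ℝ → ℝ × ℝ) :
    sp1 (fun y => rip (f y) (g y)) z = rip (tcpd1 B f z) (g z) + rip (f z) (tcpd1 B g z) :=
  fderiv_rip_eq_covDeriv hf hg (fun y => (B y).1) ((1, 0), 0)

lemma sp2_rip {f g : (ℝ × ℝ) × ℝ → ℂ} (hf : DifferentiableAt ℝ f z)
    (hg : DifferentiableAt ℝ g z) (B : (ℝ × ℝ) × ℝ → ℝ × ℝ) :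
    sp2 (fun y => rip (f y) (g y)) z = rip (tcpd2 B f z) (g z) + rip (f z) (tcpd2 B g z) :=
  fderiv_rip_eq_covDeriv hf hg (fun y => (B y).2) ((0, 1), 0)

lemma tcpd1_I_mul (hv : DifferentiableAt ℝ v z) (B : (ℝ × ℝ) × ℝ → ℝ × ℝ) :
    tcpd1 B (fun y => I * v y) z = I * tcpd1 B v z :=
  covDeriv_I_mul hv (fun y => (B y).1) ((1, 0), 0)

lemma tcpd2_I_mul (hv : DifferentiableAt ℝ v z) (B : (ℝ × ℝ) × ℝ → ℝ × ℝ) :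
    tcpd2 B (fun y => I * v y) z = I * tcpd2 B v z :=
  covDeriv_I_mul hv (fun y => (B y).2) ((0, 1), 0)

lemma sp1_sub {f g : (ℝ × ℝ) × ℝ → ℝ} (hf : DifferentiableAt ℝ f z)
    (hg : DifferentiableAt ℝ g z) : sp1 (fun y => f y - g y) z = sp1 f z - sp1 g z := by
  simp only [sp1, fderiv_fun_sub hf hg, sub_apply]

lemma sp2_sub {f g : (ℝ × ℝ) × ℝ → ℝ} (hf : DifferentiableAt ℝ f z)
    (hg : DifferentiableAt ℝ g z) : sp2 (fun y => f y - g y) z = sp2 f z - sp2 g z := by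
  simp only [sp2, fderiv_fun_sub hf hg, sub_apply]

lemma tcurl_prodMk {f g : (ℝ × ℝ) × ℝ → ℝ} (hf : DifferentiableAt ℝ f z)
    (hg : DifferentiableAt ℝ g z) :
    tcurl (fun y => (f y, g y)) z = sp1 g z - sp2 f z := by
  simp only [tcurl, sp1, sp2, hf.fderiv_prodMk hg, ContinuousLinearMap.prod_apply]

lemma tcurl_add (hX : DifferentiableAt ℝ X z) (hY : DifferentiableAt ℝ Y z) :
    tcurl (fun y => X y + Y y) z = tcurl X z + tcurl Y z := by
  simp only [tcurl, sp1, sp2, fderiv_fun_add hX hY, add_apply, Prod.fst_add, Prod.snd_add]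
  ring

lemma differentiableAt_tcurl (hB : ContDiffAt ℝ 2 B z) : DifferentiableAt ℝ (tcurl B) z := by
  have hB' : DifferentiableAt ℝ (fderiv ℝ B) z :=
    (hB.fderiv_right (m := 1) le_rfl).differentiableAt one_ne_zero
  exact (hB'.clm_apply (differentiableAt_const _)).snd.sub
    (hB'.clm_apply (differentiableAt_const _)).fst

lemma tcpd2_tcpd1_comm (hv : ContDiffAt ℝ 2 v z) (hB : DifferentiableAt ℝ B z) :
    tcpd2 B (tcpd1 B v) z = tcpd1 B (tcpd2 B v) z + I * (tcurl B z : ℂ) * v z := by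
  have hcurl : tcurl B z = sp1 (fun y => (B y).2) z - sp2 (fun y => (B y).1) z :=
    tcurl_prodMk hB.fst hB.snd
  rw [hcurl]
  exact covDeriv_covDeriv_comm hv hB.fst hB.snd ((1, 0), 0) ((0, 1), 0)

lemma tvort_eq_two_mul_rip_add (hv : ContDiffAt ℝ 2 v z) (hB : DifferentiableAt ℝ B z) :
    tvort v B z = 2 * rip (I * tcpd1 B v z) (tcpd2 B v z) + (1 - normSq (v z)) * tcurl B z := by
  have hv' : DifferentiableAt ℝ v z := hv.differentiableAt two_ne_zero
  have hIv : DifferentiableAt ℝ (fun y => I * v y) z := hv'.const_mul I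
  have hp := differentiableAt_tcpd1 hv hB
  have hq := differentiableAt_tcpd2 hv hB
  have hcurrent : tcurl (fun y => ripv (I * v y) (tcovGrad B v y)) z
      = (rip (I * tcpd1 B v z) (tcpd2 B v z) + rip (I * v z) (tcpd1 B (tcpd2 B v) z))
        - (rip (I * tcpd2 B v z) (tcpd1 B v z) + rip (I * v z) (tcpd2 B (tcpd1 B v) z)) := by
    simp only [ripv, tcovGrad]
    rw [tcurl_prodMk (differentiableAt_rip hIv hp) (differentiableAt_rip hIv hq),
      sp1_rip hIv hq B, sp2_rip hIv hp B, tcpd1_I_mul hv', tcpd2_I_mul hv']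
  have hsplit : tvort v B z
      = tcurl (fun y => ripv (I * v y) (tcovGrad B v y)) z + tcurl B z :=
    tcurl_add ((differentiableAt_rip hIv hp).prodMk (differentiableAt_rip hIv hq)) hB
  rw [hsplit, hcurrent, tcpd2_tcpd1_comm hv hB, rip_add_right, mul_assoc I, rip_I_mul_I_mul,
    ← real_smul, rip_eq_inner (v z), real_inner_smul_right, ← rip_eq_inner, rip_self,
    rip_I_mul_left_swap (tcpd2 B v z)]
  ring

end SpaceTime

section StressEnergy

variable {ε : ℝ} {v : (ℝ × ℝ) × ℝ → ℂ} {B : (ℝ × ℝ) × ℝ → ℝ × ℝ} {z : (ℝ × ℝ) × ℝ}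

/-- The density `½|∇_B v|² + (1 − |v|²)²/(4ε²) − ½(curl B)²` subtracted on the diagonal of the
stress-energy tensor. It is the energy density minus the isotropic Maxwell term `(curl B)²`, hence
the sign of its last summand. -/
def isotropicStress (ε : ℝ) (v : (ℝ × ℝ) × ℝ → ℂ) (B : (ℝ × ℝ) × ℝ → ℝ × ℝ)
    (z : (ℝ × ℝ) × ℝ) : ℝ :=
  (1 / 2) * (normSq (tcpd1 B v z) + normSq (tcpd2 B v z))
    + (1 - normSq (v z)) ^ 2 / (4 * ε ^ 2) - (1 / 2) * (tcurl B z) ^ 2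

/-- The divergence `(∂₁T₁₁ + ∂₂T₂₁, ∂₁T₁₂ + ∂₂T₂₂)` of the stress-energy tensor
`T_{ij} = (∂_i^B v, ∂_j^B v) − δ_{ij} (½|∇_B v|² + (1 − |v|²)²/(4ε²) − ½(curl B)²)`. -/
def stressEnergyDiv (ε : ℝ) (v : (ℝ × ℝ) × ℝ → ℂ) (B : (ℝ × ℝ) × ℝ → ℝ × ℝ)
    (z : (ℝ × ℝ) × ℝ) : ℝ × ℝ :=
  (sp1 (fun y => rip (tcpd1 B v y) (tcpd1 B v y) - isotropicStress ε v B y) z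
      + sp2 (fun y => rip (tcpd2 B v y) (tcpd1 B v y)) z,
    sp1 (fun y => rip (tcpd1 B v y) (tcpd2 B v y)) z
      + sp2 (fun y => rip (tcpd2 B v y) (tcpd2 B v y) - isotropicStress ε v B y) z)

lemma hasFDerivAt_isotropicStress (hv : ContDiffAt ℝ 2 v z) (hB : ContDiffAt ℝ 2 B z) :
    HasFDerivAt (isotropicStress ε v B)
      ((1 / 2 : ℝ) • (fderiv ℝ (fun y => normSq (tcpd1 B v y)) z
          + fderiv ℝ (fun y => normSq (tcpd2 B v y)) z)
        - ((1 - normSq (v z)) / (2 * ε ^ 2)) • fderiv ℝ (fun y => normSq (v y)) z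
        - tcurl B z • fderiv ℝ (tcurl B) z) z := by
  have hB' : DifferentiableAt ℝ B z := hB.differentiableAt two_ne_zero
  have hp := (differentiableAt_normSq (differentiableAt_tcpd1 hv hB')).hasFDerivAt
  have hq := (differentiableAt_normSq (differentiableAt_tcpd2 hv hB')).hasFDerivAt
  have hw := (differentiableAt_normSq (hv.differentiableAt two_ne_zero)).hasFDerivAt
  have hh := (differentiableAt_tcurl hB).hasFDerivAt
  refine ((((hp.add hq).const_mul (1 / 2)).add
    (((hw.const_sub 1).pow 2).mul_const (4 * ε ^ 2)⁻¹)).sub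
    ((hh.pow 2).const_mul (1 / 2))).congr_fderiv ?_
  refine ContinuousLinearMap.ext fun d => ?_
  simp only [sub_apply, add_apply, neg_apply, smul_apply, smul_eq_mul, nsmul_eq_mul,
    Nat.cast_ofNat, pow_one, Nat.add_one_sub_one]
  ring

lemma fderiv_isotropicStress_eq_covDeriv (hv : ContDiffAt ℝ 2 v z) (hB : ContDiffAt ℝ 2 B z)
    (a : (ℝ × ℝ) × ℝ → ℝ) (d : (ℝ × ℝ) × ℝ) :
    fderiv ℝ (isotropicStress ε v B) z d
      = rip (tcpd1 B v z) (covDeriv a d (tcpd1 B v) z)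
        + rip (tcpd2 B v z) (covDeriv a d (tcpd2 B v) z)
        - (1 - normSq (v z)) / ε ^ 2 * rip (v z) (covDeriv a d v z)
        - tcurl B z * fderiv ℝ (tcurl B) z d := by
  have hB' : DifferentiableAt ℝ B z := hB.differentiableAt two_ne_zero
  rw [(hasFDerivAt_isotropicStress hv hB).fderiv]
  simp only [add_apply, sub_apply, smul_apply, smul_eq_mul,
    fderiv_normSq_eq_covDeriv (differentiableAt_tcpd1 hv hB') a,
    fderiv_normSq_eq_covDeriv (differentiableAt_tcpd2 hv hB') a,
    fderiv_normSq_eq_covDeriv (hv.differentiableAt two_ne_zero) a]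
  ring

lemma sp1_isotropicStress (hv : ContDiffAt ℝ 2 v z) (hB : ContDiffAt ℝ 2 B z) :
    sp1 (isotropicStress ε v B) z
      = rip (tcpd1 B v z) (tcpd1 B (tcpd1 B v) z) + rip (tcpd2 B v z) (tcpd1 B (tcpd2 B v) z)
        - (1 - normSq (v z)) / ε ^ 2 * rip (v z) (tcpd1 B v z)
        - tcurl B z * sp1 (tcurl B) z :=
  fderiv_isotropicStress_eq_covDeriv hv hB (fun y => (B y).1) ((1, 0), 0)

lemma sp2_isotropicStress (hv : ContDiffAt ℝ 2 v z) (hB : ContDiffAt ℝ 2 B z) :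
    sp2 (isotropicStress ε v B) z
      = rip (tcpd1 B v z) (tcpd2 B (tcpd1 B v) z) + rip (tcpd2 B v z) (tcpd2 B (tcpd2 B v) z)
        - (1 - normSq (v z)) / ε ^ 2 * rip (v z) (tcpd2 B v z)
        - tcurl B z * sp2 (tcurl B) z :=
  fderiv_isotropicStress_eq_covDeriv hv hB (fun y => (B y).2) ((0, 1), 0)

lemma stressEnergyDiv_eq_ripv_sub_smul_perp (hv : ContDiffAt ℝ 2 v z) (hB : ContDiffAt ℝ 2 B z) :
    stressEnergyDiv ε v B z
      = ripv (tcovLap B v z + v z / (ε ^ 2 : ℂ) * (1 - (normSq (v z) : ℂ))) (tcovGrad B v z)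
        - tcurl B z • perp (tgradPerp (tcurl B) z + ripv (I * v z) (tcovGrad B v z)) := by
  have hB' : DifferentiableAt ℝ B z := hB.differentiableAt two_ne_zero
  have hp := differentiableAt_tcpd1 hv hB'
  have hq := differentiableAt_tcpd2 hv hB'
  have hL := (hasFDerivAt_isotropicStress (ε := ε) hv hB).differentiableAt
  have hpot : v z / (ε ^ 2 : ℂ) * (1 - (normSq (v z) : ℂ))
      = (((1 - normSq (v z)) / ε ^ 2 : ℝ) : ℂ) * v z := by
    push_cast; ring
  rw [stressEnergyDiv, sp1_sub (differentiableAt_rip hp hp) hL,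
    sp2_sub (differentiableAt_rip hq hq) hL, sp1_rip hp hp B, sp1_rip hp hq B, sp2_rip hq hp B,
    sp2_rip hq hq B, sp1_isotropicStress hv hB, sp2_isotropicStress hv hB, hpot,
    tcpd2_tcpd1_comm hv hB', ripv_add_left, ripv_ofReal_mul_left]
  simp only [ripv, perp, tgradPerp, tcovGrad, tcovLap, Prod.mk_add_mk, Prod.smul_mk,
    Prod.mk_sub_mk, smul_eq_mul, rip_add_left, rip_add_right, rip_I_mul_ofReal_mul_right]
  ext <;> ring

theorem stress_energy_tensor_divergence_accelerated_general
    {lam : ℝ} {Z : ℝ × ℝ} (_hε : ε ≠ 0) (_hlam : lam ≠ 0)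
    (hv : ContDiffAt ℝ 2 v z) (hB : ContDiffAt ℝ 2 B z)
    (heq1 : (lam : ℂ)⁻¹ * tdt v z
      = tcovLap B v z + v z / (ε ^ 2 : ℂ) * (1 - (normSq (v z) : ℂ))
        + 2 * I * cdotR (tcovGrad B v z) Z - v z * ((rdot Z Z : ℝ) : ℂ))
    (heq2 : lam⁻¹ • tdt B z
      = tgradPerp (tcurl B) z + ripv (I * v z) (tcovGrad B v z) + (normSq (v z) - 1) • Z) :
    stressEnergyDiv ε v B z
      = lam⁻¹ • (ripv (tdt v z) (tcovGrad B v z) - tcurl B z • perp (tdt B z))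
        + rdot Z Z • ripv (v z) (tcovGrad B v z) - tvort v B z • perp Z := by
  have hmatter : tcovLap B v z + v z / (ε ^ 2 : ℂ) * (1 - (normSq (v z) : ℂ))
      = ((lam⁻¹ : ℝ) : ℂ) * tdt v z + ((rdot Z Z : ℝ) : ℂ) * v z
        - ((2 : ℝ) : ℂ) * (I * cdotR (tcovGrad B v z) Z) := by
    push_cast
    linear_combination -heq1
  have hfield : tgradPerp (tcurl B) z + ripv (I * v z) (tcovGrad B v z)
      = lam⁻¹ • tdt B z - (normSq (v z) - 1) • Z := by
    rw [heq2, add_sub_cancel_right]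
  have hcross : ripv (I * cdotR (tcovGrad B v z) Z) (tcovGrad B v z)
      = rip (I * tcpd1 B v z) (tcpd2 B v z) • perp Z :=
    ripv_I_mul_cdotR _ _
  rw [stressEnergyDiv_eq_ripv_sub_smul_perp hv hB, hmatter, hfield,
    tvort_eq_two_mul_rip_add hv (hB.differentiableAt two_ne_zero),
    ripv_sub_left, ripv_add_left, ripv_ofReal_mul_left, ripv_ofReal_mul_left,
    ripv_ofReal_mul_left, hcross, perp_sub, perp_smul, perp_smul]
  module

end StressEnergy

/-- for solutions of the accelerated Ginzburg–Landau equations,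
`div T = λ⁻¹((∂_t v, ∇_B v) − h'(∂_t B)^⊥) + (v, ∇_B v)|Z|² − μ(v,B) Z^⊥`. -/
theorem stress_energy_tensor_divergence_accelerated
    (Ω : Set (ℝ × ℝ)) (hΩ : IsOpen Ω) (ε : ℝ) (hε : 0 < ε) (lam : ℝ) (hlam : 0 < lam)
    (Z : ℝ × ℝ → ℝ × ℝ) (hZ : ContDiffOn ℝ (⊤ : ℕ∞) Z Ω)
    (v : (ℝ × ℝ) × ℝ → ℂ) (B : (ℝ × ℝ) × ℝ → ℝ × ℝ)
    (hv : ContDiffOn ℝ (⊤ : ℕ∞) v (Ω ×ˢ (Set.univ : Set ℝ)))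
    (hB : ContDiffOn ℝ (⊤ : ℕ∞) B (Ω ×ˢ (Set.univ : Set ℝ)))
    (heq1 : ∀ x ∈ Ω, ∀ t : ℝ,
      (lam : ℂ)⁻¹ * tdt v (x, t)
        = tcovLap B v (x, t)
          + v (x, t) / (ε ^ 2 : ℂ) * (1 - (Complex.normSq (v (x, t)) : ℂ))
          + 2 * Complex.I * cdotR (tcovGrad B v (x, t)) (Z x)
          - v (x, t) * ((rdot (Z x) (Z x) : ℝ) : ℂ))
    (heq2 : ∀ x ∈ Ω, ∀ t : ℝ,
      lam⁻¹ • tdt B (x, t)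
        = tgradPerp (tcurl B) (x, t)
          + ripv (Complex.I * v (x, t)) (tcovGrad B v (x, t))
          + (Complex.normSq (v (x, t)) - 1) • Z x)
    (T11 T12 T21 T22 : (ℝ × ℝ) × ℝ → ℝ)
    (hT11 : T11 = fun z => rip (tcpd1 B v z) (tcpd1 B v z)
      - ((1 / 2) * (Complex.normSq (tcpd1 B v z) + Complex.normSq (tcpd2 B v z))
        + (1 - Complex.normSq (v z)) ^ 2 / (4 * ε ^ 2) - (1 / 2) * (tcurl B z) ^ 2))
    (hT12 : T12 = fun z => rip (tcpd1 B v z) (tcpd2 B v z))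
    (hT21 : T21 = fun z => rip (tcpd2 B v z) (tcpd1 B v z))
    (hT22 : T22 = fun z => rip (tcpd2 B v z) (tcpd2 B v z)
      - ((1 / 2) * (Complex.normSq (tcpd1 B v z) + Complex.normSq (tcpd2 B v z))
        + (1 - Complex.normSq (v z)) ^ 2 / (4 * ε ^ 2) - (1 / 2) * (tcurl B z) ^ 2)) :
    ∀ x ∈ Ω, ∀ t : ℝ,
      (sp1 T11 (x, t) + sp2 T21 (x, t), sp1 T12 (x, t) + sp2 T22 (x, t))
        = lam⁻¹ • (ripv (tdt v (x, t)) (tcovGrad B v (x, t))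
              - (tcurl B (x, t)) • perp (tdt B (x, t)))
          + (rdot (Z x) (Z x)) • ripv (v (x, t)) (tcovGrad B v (x, t))
          - (tvort v B (x, t)) • perp (Z x) := by
  intro x hx t
  have hU : Ω ×ˢ (Set.univ : Set ℝ) ∈ nhds (x, t) :=
    (hΩ.prod isOpen_univ).mem_nhds ⟨hx, Set.mem_univ t⟩
  subst hT11 hT12 hT21 hT22
  exact stress_energy_tensor_divergence_accelerated_general hε.ne' hlam.ne'
    ((hv.contDiffAt hU).of_le (by norm_cast))
    ((hB.contDiffAt hU).of_le (by norm_cast)) (heq1 x hx t) (heq2 x hx t)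

end
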